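/- arXiv:1111.2169 — 14 statements merged into one kernel-verified Lean document; each statement's English description precedes it below -/
import Mathlib

section
/- Let X be a non-degenerate real random variable on a probability space (Ω, μ), and let λ > 0 and σ > 0 be real numbers such that E[e^{αX}] < ∞ for all α ∈ [−λ, σ]. Then the risk premium R(λ, σ) = ψ(σ) + ψ(−λ) − ψ(σ−λ) is strictly positive, where ψ(α) = log E[e^{αX}]. -/
/-!
The claim is the strict Chebyshev association inequality
`E[exp ((σ-λ) X)] < E[exp (σ X)] * E[exp (-λ X)]`, followed by taking logarithms.
Choose `c` with `exp (σ c) = E[exp (σ X)]`. Since `x ↦ exp (σ x)` is strictly increasing and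
`x ↦ exp (-λ x)` strictly decreasing, the product
`(exp (σ X) - exp (σ c)) * (exp (-λ c) - exp (-λ X))` is nonnegative and vanishes only where
`X = c`, so its integral is positive for non-degenerate `X`. By the choice of `c` the terms
carrying `exp (-λ c)` cancel in that integral, which leaves exactly
`E[exp (σ X)] * E[exp (-λ X)] - E[exp ((σ-λ) X)]`.
-/

open MeasureTheory

/-- Positivity of the risk premium `R(λ, σ) = ψ(σ) + ψ(−λ) − ψ(σ−λ)` in a geometric
Lévy model, where `ψ α = log E[exp (α X)]` is the cumulant generating function of a
non-degenerate random variable `X` with finite exponential moments on `[−λ, σ]`. -/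
theorem risk_premium_pos
    {Ω : Type*} [MeasurableSpace Ω] (μ : Measure Ω) [IsProbabilityMeasure μ]
    (X : Ω → ℝ) (hX : Measurable X)
    (hnd : ¬ ∃ c : ℝ, ∀ᵐ ω ∂μ, X ω = c)
    (lam sig : ℝ) (hlam : 0 < lam) (hsig : 0 < sig)
    (hint : ∀ α ∈ Set.Icc (-lam) sig, Integrable (fun ω => Real.exp (α * X ω)) μ) :
    0 < Real.log (∫ ω, Real.exp (sig * X ω) ∂μ)
        + Real.log (∫ ω, Real.exp ((-lam) * X ω) ∂μ)
        - Real.log (∫ ω, Real.exp ((sig - lam) * X ω) ∂μ) := by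
  have hU := hint sig ⟨by linarith, le_refl _⟩
  have hV := hint (-lam) ⟨le_refl _, by linarith⟩
  have hW := hint (sig - lam) ⟨by linarith, by linarith⟩
  have ha := integral_exp_pos hU
  have hb := integral_exp_pos hV
  have hw := integral_exp_pos hW
  set a := ∫ ω, Real.exp (sig * X ω) ∂μ with ha_def
  set b := ∫ ω, Real.exp ((-lam) * X ω) ∂μ with hb_def
  set w := ∫ ω, Real.exp ((sig - lam) * X ω) ∂μ with hw_def
  obtain ⟨c, hc⟩ : ∃ c : ℝ, Real.exp (sig * c) = a :=
    ⟨Real.log a / sig, by rw [mul_div_cancel₀ _ hsig.ne', Real.exp_log ha]⟩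
  set d := Real.exp ((-lam) * c) with hd
  have hpos : ∀ x : ℝ, x ≠ c →
      0 < (Real.exp (sig * x) - a) * (d - Real.exp ((-lam) * x)) := by
    intro x hx
    rw [← hc, hd]
    rcases lt_or_gt_of_ne hx with h | h
    · apply mul_pos_of_neg_of_neg <;> rw [sub_neg, Real.exp_lt_exp] <;> nlinarith
    · apply mul_pos <;> rw [sub_pos, Real.exp_lt_exp] <;> nlinarith
  have hexpand : ∀ ω, (Real.exp (sig * X ω) - a) * (d - Real.exp ((-lam) * X ω)) =
      d * Real.exp (sig * X ω) + a * Real.exp ((-lam) * X ω)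
        - Real.exp ((sig - lam) * X ω) - d * a := by
    intro ω
    have h : Real.exp ((sig - lam) * X ω) =
        Real.exp (sig * X ω) * Real.exp ((-lam) * X ω) := by
      rw [← Real.exp_add]; ring_nf
    rw [h]; ring
  have hUV : Integrable
      (fun ω => d * Real.exp (sig * X ω) + a * Real.exp ((-lam) * X ω)) μ :=
    (hU.const_mul d).add (hV.const_mul a)
  have hUVW : Integrable (fun ω => d * Real.exp (sig * X ω) + a * Real.exp ((-lam) * X ω)
      - Real.exp ((sig - lam) * X ω)) μ := hUV.sub hW
  have hI : Integrable
      (fun ω => (Real.exp (sig * X ω) - a) * (d - Real.exp ((-lam) * X ω))) μ := by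
    simp only [hexpand]
    exact hUVW.sub (integrable_const _)
  have hval : ∫ ω, (Real.exp (sig * X ω) - a) * (d - Real.exp ((-lam) * X ω)) ∂μ =
      a * b - w := by
    simp only [hexpand]
    rw [integral_sub hUVW (integrable_const _), integral_sub hUV hW,
      integral_add (hU.const_mul d) (hV.const_mul a), integral_const_mul, integral_const_mul,
      integral_const, ← ha_def, ← hb_def, ← hw_def]
    simp
    ring
  have hnonneg : ∀ ω, 0 ≤ (Real.exp (sig * X ω) - a) * (d - Real.exp ((-lam) * X ω)) := by
    intro ω
    by_cases h : X ω = c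
    · simp [h, hc]
    · exact (hpos _ h).le
  have hlt : 0 < a * b - w := by
    rw [← hval]
    refine lt_of_le_of_ne (integral_nonneg hnonneg) fun h0 => hnd ⟨c, ?_⟩
    filter_upwards [(integral_eq_zero_iff_of_nonneg hnonneg hI).1 h0.symm] with ω hω
    by_contra hne
    exact (hpos _ hne).ne' hω
  rw [← Real.log_mul ha.ne' hb.ne', sub_pos]
  exact Real.log_lt_log hw (by linarith)
end

section
/- Let X be a non-degenerate real random variable on a probability space (Ω, μ), let σ > 0, and let 0 < λ < λ' be real numbers such that E[e^{αX}] < ∞ for all α ∈ [−λ', σ]. Then R(λ', σ) > R(λ, σ), where R(λ, σ) = ψ(σ) + ψ(−λ) − ψ(σ−λ) and ψ(α) = log E[e^{αX}]. That is, the risk premium is strictly increasing in the risk aversion λ. -/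
/-!
The cumulant generating function `ψ` of a non-degenerate random variable is strictly convex where
it is finite. Writing `a = -λ'`, `c = σ - λ`, both `-λ` and `σ - λ'` lie strictly between `a` and
`c`, and they have the same sum `a + c`; so strict convexity, applied at these two points with
complementary weights, gives `ψ(-λ) + ψ(σ - λ') < ψ(-λ') + ψ(σ - λ)`, which is the claim.

Strict convexity of `ψ` comes from that of `exp`, applied pointwise to the normalized exponents
`a X - ψ(a)` and `c X - ψ(c)`: equality after integration would force these to agree almost
everywhere, and hence `X` to be almost everywhere constant.
-/

open MeasureTheory

/-- Strict convexity of the cumulant generating function of a non-degenerate random variable. -/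
lemma log_integral_exp_lt
    {Ω : Type*} [MeasurableSpace Ω] (μ : Measure Ω) [IsProbabilityMeasure μ]
    (X : Ω → ℝ) (hnd : ¬ ∃ c : ℝ, ∀ᵐ ω ∂μ, X ω = c)
    {a c p q : ℝ} (hac : a < c) (hp : 0 < p) (hq : 0 < q) (hpq : p + q = 1)
    (ha : Integrable (fun ω => Real.exp (a * X ω)) μ)
    (hc : Integrable (fun ω => Real.exp (c * X ω)) μ)
    (hm : Integrable (fun ω => Real.exp ((p * a + q * c) * X ω)) μ) :
    Real.log (∫ ω, Real.exp ((p * a + q * c) * X ω) ∂μ)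
      < p * Real.log (∫ ω, Real.exp (a * X ω) ∂μ)
        + q * Real.log (∫ ω, Real.exp (c * X ω) ∂μ) := by
  have hapos := integral_exp_pos ha
  have hcpos := integral_exp_pos hc
  have hmpos := integral_exp_pos hm
  set A := Real.log (∫ ω, Real.exp (a * X ω) ∂μ) with hA
  set C := Real.log (∫ ω, Real.exp (c * X ω) ∂μ) with hC
  have eA : ∫ ω, Real.exp (a * X ω) ∂μ = Real.exp A := (Real.exp_log hapos).symm
  have eC : ∫ ω, Real.exp (c * X ω) ∂μ = Real.exp C := (Real.exp_log hcpos).symm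
  rw [Real.log_lt_iff_lt_exp hmpos]
  -- The pointwise convexity defect of `exp` between the two normalized exponents.
  set D : Ω → ℝ := fun ω => p * Real.exp (-A) * Real.exp (a * X ω)
    + q * Real.exp (-C) * Real.exp (c * X ω)
    - Real.exp (-(p * A + q * C)) * Real.exp ((p * a + q * c) * X ω) with hD
  have hDeq : ∀ ω, D ω = p * Real.exp (a * X ω - A) + q * Real.exp (c * X ω - C)
      - Real.exp (p * (a * X ω - A) + q * (c * X ω - C)) := by
    intro ω
    simp only [hD, mul_assoc, ← Real.exp_add]
    ring_nf
  have hD0 : ∀ ω, 0 ≤ D ω := by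
    intro ω
    rw [hDeq, sub_nonneg]
    exact convexOn_exp.2 (Set.mem_univ _) (Set.mem_univ _) hp.le hq.le hpq
  have i1 := ha.const_mul (p * Real.exp (-A))
  have i2 := hc.const_mul (q * Real.exp (-C))
  have i3 := hm.const_mul (Real.exp (-(p * A + q * C)))
  have hDint : Integrable D μ := (i1.add i2).sub i3
  have hI : ∫ ω, D ω ∂μ = 1 - Real.exp (-(p * A + q * C))
      * ∫ ω, Real.exp ((p * a + q * c) * X ω) ∂μ := by
    have h1 : ∫ ω, D ω ∂μ = _ := integral_sub (i1.add i2) i3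
    have h2 := integral_add i1 i2
    rw [h1, h2, integral_const_mul, integral_const_mul, integral_const_mul, eA, eC,
      mul_assoc, mul_assoc, ← Real.exp_add, ← Real.exp_add]
    simp [hpq]
  have hpos : 0 < ∫ ω, D ω ∂μ := by
    refine lt_of_le_of_ne (integral_nonneg hD0) fun h0 => hnd ⟨(C - A) / (c - a), ?_⟩
    have hz := (integral_eq_zero_iff_of_nonneg hD0 hDint).1 h0.symm
    filter_upwards [hz] with ω hω
    have hxy : a * X ω - A = c * X ω - C := by
      by_contra hne
      have h := strictConvexOn_exp.2 (Set.mem_univ _) (Set.mem_univ _) hne hp hq hpq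
      simp only [smul_eq_mul] at h
      have h' : D ω = 0 := hω
      rw [hDeq] at h'
      linarith
    rw [eq_div_iff (by linarith)]
    linarith
  rw [hI, Real.exp_neg, sub_pos, inv_mul_lt_one₀ (Real.exp_pos _)] at hpos
  exact hpos

/-- The risk premium `R(λ, σ) = ψ(σ) + ψ(−λ) − ψ(σ−λ)` is strictly increasing in the
risk aversion `λ`: if `0 < λ < λ'` and the exponential moments of the non-degenerate
random variable `X` are finite on `[−λ', σ]`, then `R(λ', σ) > R(λ, σ)`. -/
theorem risk_premium_strictMono_riskAversion
    {Ω : Type*} [MeasurableSpace Ω] (μ : Measure Ω) [IsProbabilityMeasure μ]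
    (X : Ω → ℝ) (hX : Measurable X)
    (hnd : ¬ ∃ c : ℝ, ∀ᵐ ω ∂μ, X ω = c)
    (sig lam lam' : ℝ) (hsig : 0 < sig) (hlam : 0 < lam) (hlt : lam < lam')
    (hint : ∀ α ∈ Set.Icc (-lam') sig, Integrable (fun ω => Real.exp (α * X ω)) μ) :
    Real.log (∫ ω, Real.exp (sig * X ω) ∂μ)
      + Real.log (∫ ω, Real.exp ((-lam) * X ω) ∂μ)
      - Real.log (∫ ω, Real.exp ((sig - lam) * X ω) ∂μ)
    < Real.log (∫ ω, Real.exp (sig * X ω) ∂μ)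
      + Real.log (∫ ω, Real.exp ((-lam') * X ω) ∂μ)
      - Real.log (∫ ω, Real.exp ((sig - lam') * X ω) ∂μ) := by
  have hs : 0 < sig + (lam' - lam) := by linarith
  have h0 : Integrable (fun ω => Real.exp ((-lam') * X ω)) μ :=
    hint _ ⟨by linarith, by linarith⟩
  have h1 : Integrable (fun ω => Real.exp ((sig - lam) * X ω)) μ :=
    hint _ ⟨by linarith, by linarith⟩
  have h2 : Integrable (fun ω => Real.exp ((-lam) * X ω)) μ :=
    hint _ ⟨by linarith, by linarith⟩
  have h3 : Integrable (fun ω => Real.exp ((sig - lam') * X ω)) μ :=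
    hint _ ⟨by linarith, by linarith⟩
  -- Relative positions of `-lam` and `sig - lam'` in the interval `[-lam', sig - lam]`.
  obtain ⟨p, hp⟩ : ∃ p, p = sig / (sig + (lam' - lam)) := ⟨_, rfl⟩
  obtain ⟨q, hq⟩ : ∃ q, q = (lam' - lam) / (sig + (lam' - lam)) := ⟨_, rfl⟩
  have hp0 : 0 < p := hp ▸ div_pos hsig hs
  have hq0 : 0 < q := hq ▸ div_pos (by linarith) hs
  have hpq : p + q = 1 := by rw [hp, hq]; field_simp
  have e2 : p * (-lam') + q * (sig - lam) = -lam := by rw [hp, hq]; field_simp; ring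
  have e3 : q * (-lam') + p * (sig - lam) = sig - lam' := by rw [hp, hq]; field_simp; ring
  have k2 := log_integral_exp_lt μ X hnd (by linarith : -lam' < sig - lam) hp0 hq0 hpq h0 h1
    (by rwa [e2])
  have k3 := log_integral_exp_lt μ X hnd (by linarith : -lam' < sig - lam) hq0 hp0
    (by linarith) h0 h1 (by rwa [e3])
  rw [e2] at k2
  rw [e3] at k3
  have hq1 : q = 1 - p := by linarith
  rw [hq1] at k2 k3
  linarith
end

section
/- Let X be a non-degenerate real random variable on a probability space (Ω, μ), let λ > 0, and let 0 < σ < σ' be real numbers such that E[e^{αX}] < ∞ for all α ∈ [−λ, σ']. Then R(λ, σ') > R(λ, σ), where R(λ, σ) = ψ(σ) + ψ(−λ) − ψ(σ−λ) and ψ(α) = log E[e^{αX}]. That is, the risk premium is strictly increasing in the volatility σ. -/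
/-!
The cumulant generating function `ψ` of a non-degenerate variable is strictly convex wherever it is
finite (`strictConvexOn_log_integral_exp`). Put `p = σ - λ` and `q = σ'`. The claim is
`ψ(σ) + ψ(σ' - λ) < ψ(p) + ψ(q)`, and both `σ` and `σ' - λ` lie strictly between `p` and `q` with
`σ + (σ' - λ) = p + q`: they are `a p + b q` and `b p + a q` for the same weights `a + b = 1`, so
adding the two strict convexity inequalities gives the result.

Strict convexity of `ψ` is Hölder's inequality with its equality case. With `u = pX - ψ(p)` and
`v = qX - ψ(q)`, so that `E[exp u] = E[exp v] = 1`, strict convexity of `exp` gives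
`exp (a u + b v) ≤ a exp u + b exp v` pointwise, with equality only where `u = v`, that is, where
`X = (ψ(q) - ψ(p)) / (q - p)`. As `X` is not a.e. constant, the inequality is strict in expectation.
-/

open MeasureTheory

/-- The cumulant generating function of a random variable that is not a.e. constant is strictly
convex on every convex set of exponents on which the exponential moments are finite. -/
theorem strictConvexOn_log_integral_exp
    {Ω : Type*} [MeasurableSpace Ω] (μ : Measure Ω) [IsProbabilityMeasure μ] (X : Ω → ℝ)
    (hnd : ¬ ∃ c : ℝ, ∀ᵐ ω ∂μ, X ω = c) {s : Set ℝ} (hs : Convex ℝ s)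
    (hint : ∀ α ∈ s, Integrable (fun ω => Real.exp (α * X ω)) μ) :
    StrictConvexOn ℝ s (fun α => Real.log (∫ ω, Real.exp (α * X ω) ∂μ)) := by
  refine ⟨hs, fun p hp q hq hpq a b ha hb hab => ?_⟩
  have ht := hs hp hq ha.le hb.le hab
  simp only [smul_eq_mul] at ht ⊢
  set ψ : ℝ → ℝ := fun α => Real.log (∫ ω, Real.exp (α * X ω) ∂μ) with hψ
  change ψ (a * p + b * q) < a * ψ p + b * ψ q
  have hexp : ∀ α ∈ s, ∫ ω, Real.exp (α * X ω) ∂μ = Real.exp (ψ α) := fun α hα =>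
    (Real.exp_log (integral_exp_pos (hint α hα))).symm
  have hshift : ∀ α ∈ s, ∀ c, Integrable (fun ω => Real.exp (α * X ω - c)) μ ∧
      ∫ ω, Real.exp (α * X ω - c) ∂μ = Real.exp (ψ α - c) := by
    intro α hα c
    simp only [Real.exp_sub]
    exact ⟨(hint α hα).div_const _, by rw [integral_div, hexp α hα]⟩
  obtain ⟨ip, ep⟩ := hshift p hp (ψ p)
  obtain ⟨iq, eq⟩ := hshift q hq (ψ q)
  obtain ⟨it, et⟩ := hshift _ ht (a * ψ p + b * ψ q)
  have hcomb : ∀ ω, (a * p + b * q) * X ω - (a * ψ p + b * ψ q)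
      = a * (p * X ω - ψ p) + b * (q * X ω - ψ q) := fun ω => by ring
  have ir : Integrable (fun ω => a * Real.exp (p * X ω - ψ p) + b * Real.exp (q * X ω - ψ q)) μ :=
    (ip.const_mul a).add (iq.const_mul b)
  have er : ∫ ω, (a * Real.exp (p * X ω - ψ p) + b * Real.exp (q * X ω - ψ q)) ∂μ = 1 := by
    rw [integral_add (ip.const_mul a) (iq.const_mul b), integral_const_mul, integral_const_mul,
      ep, eq]
    simpa using hab
  have hle : ∀ ω, Real.exp ((a * p + b * q) * X ω - (a * ψ p + b * ψ q))
      ≤ a * Real.exp (p * X ω - ψ p) + b * Real.exp (q * X ω - ψ q) := fun ω => by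
    rw [hcomb]
    exact convexOn_exp.2 (Set.mem_univ _) (Set.mem_univ _) ha.le hb.le hab
  have hlt : ∫ ω, Real.exp ((a * p + b * q) * X ω - (a * ψ p + b * ψ q)) ∂μ < 1 := by
    rw [← er]
    refine lt_of_le_of_ne (integral_mono it ir hle) fun heq => hnd ⟨(ψ q - ψ p) / (q - p), ?_⟩
    filter_upwards [(integral_eq_iff_of_ae_le it ir (.of_forall hle)).1 heq] with ω hω
    -- equality in the convexity inequality for `exp` at `ω` forces `u ω = v ω`
    have huv : p * X ω - ψ p = q * X ω - ψ q := by
      by_contra hne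
      have := strictConvexOn_exp.2 (Set.mem_univ _) (Set.mem_univ _) hne ha hb hab
      simp only [smul_eq_mul] at this
      rw [← hcomb] at this
      exact this.ne hω
    rw [eq_div_iff (sub_ne_zero.2 hpq.symm)]
    linarith
  rw [et, Real.exp_lt_one_iff] at hlt
  linarith


/-- The risk premium `R(λ, σ) = ψ(σ) + ψ(−λ) − ψ(σ−λ)` is strictly increasing in the
volatility `σ`: if `0 < σ < σ'` and the exponential moments of the non-degenerate
random variable `X` are finite on `[−λ, σ']`, then `R(λ, σ') > R(λ, σ)`. -/
theorem risk_premium_strictMono_volatility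
    {Ω : Type*} [MeasurableSpace Ω] (μ : Measure Ω) [IsProbabilityMeasure μ]
    (X : Ω → ℝ) (hX : Measurable X)
    (hnd : ¬ ∃ c : ℝ, ∀ᵐ ω ∂μ, X ω = c)
    (lam sig sig' : ℝ) (hlam : 0 < lam) (hsig : 0 < sig) (hlt : sig < sig')
    (hint : ∀ α ∈ Set.Icc (-lam) sig', Integrable (fun ω => Real.exp (α * X ω)) μ) :
    Real.log (∫ ω, Real.exp (sig * X ω) ∂μ)
      + Real.log (∫ ω, Real.exp ((-lam) * X ω) ∂μ)
      - Real.log (∫ ω, Real.exp ((sig - lam) * X ω) ∂μ)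
    < Real.log (∫ ω, Real.exp (sig' * X ω) ∂μ)
      + Real.log (∫ ω, Real.exp ((-lam) * X ω) ∂μ)
      - Real.log (∫ ω, Real.exp ((sig' - lam) * X ω) ∂μ) := by
  have hconv := strictConvexOn_log_integral_exp μ X hnd (convex_Icc (-lam) sig') hint
  have hd : 0 < sig' - (sig - lam) := by linarith
  have hp : sig - lam ∈ Set.Icc (-lam) sig' := ⟨by linarith, by linarith⟩
  have hq : sig' ∈ Set.Icc (-lam) sig' := ⟨by linarith, le_rfl⟩
  have hpq : sig - lam ≠ sig' := by linarith
  -- `sig = a * (sig - lam) + b * sig'`; swapping the weights gives `sig' - lam`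
  obtain ⟨a, b, ha, hb, hab, h1, h2⟩ : ∃ a b : ℝ, 0 < a ∧ 0 < b ∧ a + b = 1 ∧
      a * (sig - lam) + b * sig' = sig ∧ b * (sig - lam) + a * sig' = sig' - lam := by
    refine ⟨(sig' - sig) / (sig' - (sig - lam)), lam / (sig' - (sig - lam)),
      div_pos (by linarith) hd, div_pos hlam hd, ?_, ?_, ?_⟩ <;>
    · field_simp
      ring
  have k1 := hconv.2 hp hq hpq ha hb hab
  have k2 := hconv.2 hp hq hpq hb ha (by linarith)
  simp only [smul_eq_mul] at k1 k2
  rw [h1] at k1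
  rw [h2] at k2
  obtain rfl : b = 1 - a := by linarith
  linarith
end

section
/- Let X be a non-degenerate real random variable on a probability space (Ω, μ), and let σ > λ > 0 be real numbers such that E[e^{αX}] < ∞ for all α ∈ [−σ, σ]. Then both R(λ, σ) = ψ(σ) + ψ(−λ) − ψ(σ−λ) > 0 and R̃(λ, σ) = ψ(−σ) + ψ(σ−λ) − ψ(−λ) > 0, where ψ(α) = log E[e^{αX}]. -/
open MeasureTheory

/-!
Both inequalities are instances of the strict convexity of the cumulant generating function
`ψ` of a non-degenerate variable, `cgf_lt_of_not_ae_const`. Since `ψ 0 = 0`, the first one reads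
`ψ 0 + ψ (σ - λ) < ψ (-λ) + ψ σ` and the second one `ψ (-λ) + ψ 0 < ψ (-σ) + ψ (σ - λ)`. In each
case the two arguments on the left lie strictly between the two on the right and have the same
sum, which is the situation of `cgf_add_lt`.
-/

/-- Strict convexity of the cumulant generating function of a non-degenerate variable. After
normalising `exp (a X)` and `exp (d X)` to have mean one, this is the pointwise strict convexity
of `exp`, integrated; equality would force `(a - d) X` to be almost surely constant. -/
lemma cgf_lt_of_not_ae_const
    {Ω : Type*} [MeasurableSpace Ω] {μ : Measure Ω} [IsProbabilityMeasure μ] {X : Ω → ℝ}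
    (hnd : ¬ ∃ c : ℝ, ∀ᵐ ω ∂μ, X ω = c) {a d s t : ℝ} (had : a ≠ d)
    (hs : 0 < s) (ht : 0 < t) (hst : s + t = 1)
    (ha : Integrable (fun ω => Real.exp (a * X ω)) μ)
    (hd : Integrable (fun ω => Real.exp (d * X ω)) μ)
    (hb : Integrable (fun ω => Real.exp ((s * a + t * d) * X ω)) μ) :
    ProbabilityTheory.cgf X μ (s * a + t * d)
      < s * ProbabilityTheory.cgf X μ a + t * ProbabilityTheory.cgf X μ d := by
  -- The normalised exponential has mean `exp (ψ c - k)`.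
  have key (c k : ℝ) (hc : Integrable (fun ω => Real.exp (c * X ω)) μ) :
      Integrable (fun ω => Real.exp (c * X ω - k)) μ ∧
      ∫ ω, Real.exp (c * X ω - k) ∂μ = Real.exp (ProbabilityTheory.cgf X μ c - k) := by
    simp only [Real.exp_sub]
    refine ⟨hc.div_const _, ?_⟩
    rw [integral_div, ProbabilityTheory.exp_cgf hc, ProbabilityTheory.mgf]
  set A := ProbabilityTheory.cgf X μ a
  set D := ProbabilityTheory.cgf X μ d
  obtain ⟨ia, ea⟩ := key a A ha
  obtain ⟨id, ed⟩ := key d D hd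
  obtain ⟨ib, eb⟩ := key (s * a + t * d) (s * A + t * D) hb
  have split (ω : Ω) : (s * a + t * d) * X ω - (s * A + t * D)
      = s * (a * X ω - A) + t * (d * X ω - D) := by ring
  let g : Ω → ℝ := fun ω => s * Real.exp (a * X ω - A) + t * Real.exp (d * X ω - D)
    - Real.exp ((s * a + t * d) * X ω - (s * A + t * D))
  have g_nonneg : 0 ≤ g := fun ω => by
    have := convexOn_exp.2 (Set.mem_univ (a * X ω - A)) (Set.mem_univ (d * X ω - D))
      hs.le ht.le hst
    simp only [smul_eq_mul] at this
    simp only [g, split, Pi.zero_apply]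
    linarith
  have g_int : Integrable g μ := ((ia.const_mul s).add (id.const_mul t)).sub ib
  have g_eq : ∫ ω, g ω ∂μ
      = 1 - Real.exp (ProbabilityTheory.cgf X μ (s * a + t * d) - (s * A + t * D)) := by
    have h1 : ∫ ω, g ω ∂μ = s * (∫ ω, Real.exp (a * X ω - A) ∂μ)
        + t * (∫ ω, Real.exp (d * X ω - D) ∂μ)
        - ∫ ω, Real.exp ((s * a + t * d) * X ω - (s * A + t * D)) ∂μ := by
      rw [← integral_const_mul, ← integral_const_mul,
        ← integral_add (ia.const_mul s) (id.const_mul t)]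
      exact integral_sub ((ia.const_mul s).add (id.const_mul t)) ib
    rw [h1, ea, ed, eb]
    simp [A, D, hst]
  by_contra! hle
  have h0 : ∫ ω, g ω ∂μ = 0 := by
    refine le_antisymm ?_ (integral_nonneg g_nonneg)
    rw [g_eq]
    linarith [Real.one_le_exp (sub_nonneg.2 hle)]
  rw [integral_eq_zero_iff_of_nonneg g_nonneg g_int] at h0
  refine hnd ⟨(A - D) / (a - d), ?_⟩
  filter_upwards [h0] with ω hω
  by_contra hne
  have hne' : a * X ω - A ≠ d * X ω - D := fun h => hne <| by
    rw [eq_div_iff (sub_ne_zero.2 had)]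
    linarith
  have := strictConvexOn_exp.2 (Set.mem_univ (a * X ω - A)) (Set.mem_univ (d * X ω - D))
    hne' hs ht hst
  simp only [smul_eq_mul] at this
  simp only [g, split, Pi.zero_apply] at hω
  linarith

/-- Of two pairs with the same sum, the inner one has the smaller sum of cumulant generating
function values: the two inner points are convex combinations of the outer ones with exchanged
weights. -/
lemma cgf_add_lt
    {Ω : Type*} [MeasurableSpace Ω] {μ : Measure Ω} [IsProbabilityMeasure μ] {X : Ω → ℝ}
    (hnd : ¬ ∃ c : ℝ, ∀ᵐ ω ∂μ, X ω = c) {a b c d : ℝ} (hab : a < b) (hbd : b < d)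
    (hsum : a + d = b + c)
    (ha : Integrable (fun ω => Real.exp (a * X ω)) μ)
    (hb : Integrable (fun ω => Real.exp (b * X ω)) μ)
    (hc : Integrable (fun ω => Real.exp (c * X ω)) μ)
    (hd : Integrable (fun ω => Real.exp (d * X ω)) μ) :
    ProbabilityTheory.cgf X μ b + ProbabilityTheory.cgf X μ c
      < ProbabilityTheory.cgf X μ a + ProbabilityTheory.cgf X μ d := by
  have had : 0 < d - a := by linarith
  obtain ⟨s, hs⟩ : ∃ s, s = (d - b) / (d - a) := ⟨_, rfl⟩
  obtain ⟨t, ht⟩ : ∃ t, t = (b - a) / (d - a) := ⟨_, rfl⟩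
  have s_pos : 0 < s := hs ▸ div_pos (by linarith) had
  have t_pos : 0 < t := ht ▸ div_pos (by linarith) had
  have hst : s + t = 1 := by
    rw [hs, ht]
    field_simp
    ring
  have eb : s * a + t * d = b := by
    rw [hs, ht]
    field_simp
    ring
  have ec : t * a + s * d = c := by
    linear_combination (a + d) * hst - eb + hsum
  have h1 := cgf_lt_of_not_ae_const hnd (hab.trans hbd).ne s_pos t_pos hst ha hd (eb ▸ hb)
  have h2 := cgf_lt_of_not_ae_const hnd (hab.trans hbd).ne t_pos s_pos (by linarith) ha hd
    (ec ▸ hc)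
  rw [eb] at h1
  rw [ec] at h2
  obtain rfl : t = 1 - s := by linarith
  linarith

/-- Proposition 2: in a geometric Lévy model for foreign exchange with volatility
exceeding risk aversion (`σ > λ > 0`), both the excess rate of return on the FX rate,
`R(λ,σ) = ψ(σ) + ψ(−λ) − ψ(σ−λ)`, and the excess rate of return on the inverse FX
rate, `R̃(λ,σ) = ψ(−σ) + ψ(σ−λ) − ψ(−λ)`, are strictly positive, where
`ψ α = log E[exp (α X)]`. -/
theorem fx_risk_premia_pos
    {Ω : Type*} [MeasurableSpace Ω] (μ : Measure Ω) [IsProbabilityMeasure μ]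
    (X : Ω → ℝ) (hX : Measurable X)
    (hnd : ¬ ∃ c : ℝ, ∀ᵐ ω ∂μ, X ω = c)
    (lam sig : ℝ) (hlam : 0 < lam) (hlt : lam < sig)
    (hint : ∀ α ∈ Set.Icc (-sig) sig, Integrable (fun ω => Real.exp (α * X ω)) μ) :
    0 < Real.log (∫ ω, Real.exp (sig * X ω) ∂μ)
        + Real.log (∫ ω, Real.exp ((-lam) * X ω) ∂μ)
        - Real.log (∫ ω, Real.exp ((sig - lam) * X ω) ∂μ)
    ∧ 0 < Real.log (∫ ω, Real.exp ((-sig) * X ω) ∂μ)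
        + Real.log (∫ ω, Real.exp ((sig - lam) * X ω) ∂μ)
        - Real.log (∫ ω, Real.exp ((-lam) * X ω) ∂μ) := by
  have h0 : ProbabilityTheory.cgf X μ 0 = 0 := ProbabilityTheory.cgf_zero
  have i0 := hint 0 ⟨by linarith, by linarith⟩
  have i1 := hint sig ⟨by linarith, by linarith⟩
  have i2 := hint (-lam) ⟨by linarith, by linarith⟩
  have i3 := hint (sig - lam) ⟨by linarith, by linarith⟩
  have i4 := hint (-sig) ⟨by linarith, by linarith⟩
  have h1 := cgf_add_lt hnd (a := -lam) (b := 0) (c := sig - lam) (d := sig)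
    (by linarith) (by linarith) (by ring) i2 i0 i3 i1
  have h2 := cgf_add_lt hnd (a := -sig) (b := -lam) (c := 0) (d := sig - lam)
    (by linarith) (by linarith) (by ring) i4 i2 i0 i3
  rw [h0] at h1 h2
  simp only [ProbabilityTheory.cgf, ProbabilityTheory.mgf] at h1 h2
  constructor <;> linarith
end

section
/- Let X be a real random variable on a probability space (Ω, μ), and let λ, σ be real numbers with 0 < σ ≤ λ such that E[e^{αX}] < ∞ for all α ∈ [−λ, σ]. Then R̃(λ, σ) = ψ(−σ) + ψ(σ−λ) − ψ(−λ) ≤ 0, where ψ(α) = log E[e^{αX}]. That is, if the volatility does not exceed the risk aversion, the excess rate of return on the inverse FX rate is nonpositive. -/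
open MeasureTheory

/-!
The cumulant generating function `ψ` is convex with `ψ 0 = 0`, so `ψ (t * α) ≤ t * ψ α` for
`t ∈ [0, 1]` (`log_integral_exp_mul_le`). With `α = -λ`, the weights `t = σ / λ` and
`t = 1 - σ / λ` give upper bounds for `ψ (-σ)` and `ψ (σ - λ)` whose sum is `ψ (-λ)`.
-/

/-- Along a ray from the origin the cumulant generating function lies below its chord. Normalizing
by `L = ψ α`, convexity of `exp` between `0` and `u = α * X - L` gives
`exp (t * u) ≤ (1 - t) + t * exp u`, and the right-hand side has expectation `1`. -/
theorem log_integral_exp_mul_le {Ω : Type*} [MeasurableSpace Ω] (μ : Measure Ω)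
    [IsProbabilityMeasure μ] (X : Ω → ℝ) (α t : ℝ) (ht0 : 0 ≤ t) (ht1 : t ≤ 1)
    (hα : Integrable (fun ω => Real.exp (α * X ω)) μ)
    (htα : Integrable (fun ω => Real.exp (t * α * X ω)) μ) :
    Real.log (∫ ω, Real.exp (t * α * X ω) ∂μ)
      ≤ t * Real.log (∫ ω, Real.exp (α * X ω) ∂μ) := by
  have hpos : 0 < ∫ ω, Real.exp (α * X ω) ∂μ := integral_exp_pos hα
  set L := Real.log (∫ ω, Real.exp (α * X ω) ∂μ) with hL
  have hexpL : Real.exp L = ∫ ω, Real.exp (α * X ω) ∂μ := Real.exp_log hpos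
  have hpt : ∀ ω, Real.exp (t * α * X ω)
      ≤ Real.exp (t * L) * ((1 - t) + t * (Real.exp (-L) * Real.exp (α * X ω))) := by
    intro ω
    have h := convexOn_exp.2 (Set.mem_univ (0 : ℝ)) (Set.mem_univ (α * X ω - L))
      (sub_nonneg.2 ht1) ht0 (by ring)
    simp only [smul_eq_mul, mul_zero, zero_add, Real.exp_zero, mul_one] at h
    rw [← Real.exp_add, show -L + α * X ω = α * X ω - L by ring,
      show t * α * X ω = t * L + t * (α * X ω - L) by ring, Real.exp_add]
    gcongr
  have hint := integral_mono htα
    (((integrable_const (1 - t)).add ((hα.const_mul (Real.exp (-L))).const_mul t)).const_mul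
      (Real.exp (t * L))) hpt
  rw [Real.log_le_iff_le_exp (integral_exp_pos htα)]
  refine hint.trans_eq ?_
  simp only [Pi.add_apply]
  rw [integral_const_mul, integral_add (integrable_const _)
    ((hα.const_mul (Real.exp (-L))).const_mul t), integral_const_mul, integral_const_mul,
    ← hexpL, ← Real.exp_add]
  simp

/-- If the volatility does not exceed the risk aversion (`0 < σ ≤ λ`), then the excess
rate of return on the inverse FX rate, `R̃(λ,σ) = ψ(−σ) + ψ(σ−λ) − ψ(−λ)`, is
nonpositive, where `ψ α = log E[exp (α X)]`. -/
theorem inverse_fx_risk_premium_nonpos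
    {Ω : Type*} [MeasurableSpace Ω] (μ : Measure Ω) [IsProbabilityMeasure μ]
    (X : Ω → ℝ) (hX : Measurable X)
    (lam sig : ℝ) (hsig : 0 < sig) (hle : sig ≤ lam)
    (hint : ∀ α ∈ Set.Icc (-lam) sig, Integrable (fun ω => Real.exp (α * X ω)) μ) :
    Real.log (∫ ω, Real.exp ((-sig) * X ω) ∂μ)
      + Real.log (∫ ω, Real.exp ((sig - lam) * X ω) ∂μ)
      - Real.log (∫ ω, Real.exp ((-lam) * X ω) ∂μ) ≤ 0 := by
  have hlam : 0 < lam := hsig.trans_le hle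
  have hα := hint (-lam) ⟨le_rfl, by linarith⟩
  have e1 : sig / lam * (-lam) = -sig := by field_simp
  have e2 : (1 - sig / lam) * (-lam) = sig - lam := by field_simp; ring
  have hdiv : sig / lam ≤ 1 := (div_le_one hlam).2 hle
  have hdiv0 : 0 ≤ sig / lam := by positivity
  have h1 := log_integral_exp_mul_le μ X (-lam) (sig / lam) hdiv0 hdiv hα
    (by rw [e1]; exact hint _ ⟨by linarith, by linarith⟩)
  have h2 := log_integral_exp_mul_le μ X (-lam) (1 - sig / lam) (by linarith) (by linarith) hα
    (by rw [e2]; exact hint _ ⟨by linarith, by linarith⟩)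
  rw [e1] at h1
  rw [e2] at h2
  linarith
end

section
/- Let X be a non-degenerate real random variable on a probability space (Ω, μ) and let ψ(α) = log E[e^{αX}]. Define F(λ̃, σ̃) = ψ(−σ̃) + ψ(λ̃) − ψ(λ̃ − σ̃) for λ̃, σ̃ > 0. Then whenever all the relevant exponential moments are finite (i.e., E[e^{αX}] < ∞ for α in an interval containing the arguments used), F is strictly increasing in each of its arguments: if 0 < λ̃ < λ̃' then F(λ̃', σ̃) > F(λ̃, σ̃), and if 0 < σ̃ < σ̃' then F(λ̃, σ̃') > F(λ̃, σ̃). -/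
open MeasureTheory

/-!
The differences in question are instances of one inequality: if `x < y`, `x < z` and
`x + w = y + z`, then `ψ y + ψ z < ψ x + ψ w`, which holds for every strictly convex `ψ`.
For the first argument take `x = λ̃ - σ̃`, `w = λ̃'`; for the second, `x = -σ̃'`, `w = λ̃ - σ̃`.

The cumulant generating function of a non-degenerate variable is strictly convex where it is
finite (`strictConvexOn_cgf`). This is the strict form of Hölder's inequality: integrate the
strict convexity of `exp` between the exponents `x X - ψ x` and `y X - ψ y`, whose exponentials
both have integral `1`; these exponents agree almost everywhere only if `X` is a.e. constant.
-/

open ProbabilityTheory in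
theorem strictConvexOn_cgf {Ω : Type*} [MeasurableSpace Ω] (μ : Measure Ω)
    [IsProbabilityMeasure μ] (X : Ω → ℝ) (hnd : ¬ ∃ c : ℝ, ∀ᵐ ω ∂μ, X ω = c) :
    StrictConvexOn ℝ (integrableExpSet X μ) (cgf X μ) := by
  refine ⟨convex_integrableExpSet, ?_⟩
  intro x hx y hy hxy a b ha hb hab
  have hz : a • x + b • y ∈ integrableExpSet X μ :=
    convex_integrableExpSet hx hy ha.le hb.le hab
  simp only [smul_eq_mul] at hz ⊢
  have hone : ∀ t ∈ integrableExpSet X μ,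
      Integrable (fun ω => Real.exp (t * X ω - cgf X μ t)) μ ∧
      ∫ ω, Real.exp (t * X ω - cgf X μ t) ∂μ = 1 := by
    intro t ht
    have ht' : Integrable (fun ω => Real.exp (t * X ω)) μ := ht
    simp only [Real.exp_sub]
    refine ⟨ht'.div_const _, ?_⟩
    rw [integral_div, exp_cgf ht']
    exact div_self (mgf_pos ht').ne'
  obtain ⟨hxi, hx1⟩ := hone x hx
  obtain ⟨hyi, hy1⟩ := hone y hy
  obtain ⟨hzi, hz1⟩ := hone _ hz
  set p := cgf X μ x
  set q := cgf X μ y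
  set r := cgf X μ (a * x + b * y)
  have hexp : ∀ ω, Real.exp (a * (x * X ω - p) + b * (y * X ω - q))
      = Real.exp ((a * x + b * y) * X ω - r) * Real.exp (r - (a * p + b * q)) := by
    intro ω
    rw [← Real.exp_add]
    congr 1
    ring
  have hLi : Integrable (fun ω => Real.exp (a * (x * X ω - p) + b * (y * X ω - q))) μ := by
    simp only [hexp]
    exact hzi.mul_const _
  have hL : ∫ ω, Real.exp (a * (x * X ω - p) + b * (y * X ω - q)) ∂μ
      = Real.exp (r - (a * p + b * q)) := by
    simp only [hexp]
    rw [integral_mul_const, hz1, one_mul]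
  have hRi : Integrable
      (fun ω => a * Real.exp (x * X ω - p) + b * Real.exp (y * X ω - q)) μ :=
    (hxi.const_mul a).add (hyi.const_mul b)
  have hR : ∫ ω, (a * Real.exp (x * X ω - p) + b * Real.exp (y * X ω - q)) ∂μ = 1 := by
    rw [integral_add (hxi.const_mul a) (hyi.const_mul b), integral_const_mul,
      integral_const_mul, hx1, hy1]
    linarith
  have hle : ∀ ω, Real.exp (a * (x * X ω - p) + b * (y * X ω - q))
      ≤ a * Real.exp (x * X ω - p) + b * Real.exp (y * X ω - q) := fun ω =>
    convexOn_exp.2 (Set.mem_univ _) (Set.mem_univ _) ha.le hb.le hab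
  have hlt : Real.exp (r - (a * p + b * q)) < 1 := by
    rw [← hL, ← hR]
    refine lt_of_le_of_ne (integral_mono hLi hRi hle) fun heq => hnd ?_
    have hae := (integral_eq_iff_of_ae_le hLi hRi (ae_of_all _ hle)).1 heq
    refine ⟨(p - q) / (x - y), ?_⟩
    filter_upwards [hae] with ω hω
    -- equality in the convexity of `exp` forces the two exponents to coincide
    have hexponents : x * X ω - p = y * X ω - q := by
      by_contra hne
      exact (strictConvexOn_exp.2 (Set.mem_univ _) (Set.mem_univ _) hne ha hb hab).ne hω
    rw [eq_div_iff (sub_ne_zero.2 hxy)]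
    linarith
  have := Real.exp_lt_one_iff.1 hlt
  linarith

theorem StrictConvexOn.add_lt_add_of_add_eq {s : Set ℝ} {f : ℝ → ℝ} (hf : StrictConvexOn ℝ s f)
    {x y z w : ℝ} (hx : x ∈ s) (hw : w ∈ s) (hxy : x < y) (hxz : x < z) (h : x + w = y + z) :
    f y + f z < f x + f w := by
  have hd : 0 < w - x := by linarith
  -- `y` and `z` are reflected convex combinations of `x` and `w`
  have ha : 0 < (w - y) / (w - x) := div_pos (by linarith) hd
  have hb : 0 < (y - x) / (w - x) := div_pos (by linarith) hd
  have hab : (w - y) / (w - x) + (y - x) / (w - x) = 1 := by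
    field_simp
    ring
  have h1 := hf.2 hx hw (by linarith : x < w).ne ha hb hab
  have h2 := hf.2 hx hw (by linarith : x < w).ne hb ha (by linarith)
  have hy : (w - y) / (w - x) * x + (y - x) / (w - x) * w = y := by
    field_simp
    ring
  have hz : (y - x) / (w - x) * x + (w - y) / (w - x) * w = z := by
    obtain rfl : z = x + w - y := by linarith
    field_simp
    ring
  simp only [smul_eq_mul] at h1 h2
  rw [hy] at h1
  rw [hz] at h2
  linear_combination h1 + h2 + (f x + f w) * hab

/-- Proposition 3: the inverse excess rate of return
`F(λ̃, σ̃) = ψ(−σ̃) + ψ(λ̃) − ψ(λ̃ − σ̃)` (i.e. `R̃` expressed in terms of the mirror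
Lévy exponent and the variables `λ̃ = σ − λ`, `σ̃ = σ`) is strictly increasing in each
of its arguments, whenever the relevant exponential moments of the non-degenerate
random variable `X` are finite, where `ψ α = log E[exp (α X)]`. -/
theorem inverse_fx_risk_premium_strictMono
    {Ω : Type*} [MeasurableSpace Ω] (μ : Measure Ω) [IsProbabilityMeasure μ]
    (X : Ω → ℝ) (hX : Measurable X)
    (hnd : ¬ ∃ c : ℝ, ∀ᵐ ω ∂μ, X ω = c) :
    (∀ lt lt' st : ℝ, 0 < lt → lt < lt' → 0 < st →
      (∀ α ∈ Set.Icc (-st) lt', Integrable (fun ω => Real.exp (α * X ω)) μ) →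
      Real.log (∫ ω, Real.exp ((-st) * X ω) ∂μ)
        + Real.log (∫ ω, Real.exp (lt * X ω) ∂μ)
        - Real.log (∫ ω, Real.exp ((lt - st) * X ω) ∂μ)
      < Real.log (∫ ω, Real.exp ((-st) * X ω) ∂μ)
        + Real.log (∫ ω, Real.exp (lt' * X ω) ∂μ)
        - Real.log (∫ ω, Real.exp ((lt' - st) * X ω) ∂μ))
    ∧ (∀ lt st st' : ℝ, 0 < lt → 0 < st → st < st' →
      (∀ α ∈ Set.Icc (-st') lt, Integrable (fun ω => Real.exp (α * X ω)) μ) →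
      Real.log (∫ ω, Real.exp ((-st) * X ω) ∂μ)
        + Real.log (∫ ω, Real.exp (lt * X ω) ∂μ)
        - Real.log (∫ ω, Real.exp ((lt - st) * X ω) ∂μ)
      < Real.log (∫ ω, Real.exp ((-st') * X ω) ∂μ)
        + Real.log (∫ ω, Real.exp (lt * X ω) ∂μ)
        - Real.log (∫ ω, Real.exp ((lt - st') * X ω) ∂μ)) := by
  have hconv := strictConvexOn_cgf μ X hnd
  constructor
  · intro lt lt' st h0 h1 h2 hint
    have key := hconv.add_lt_add_of_add_eq (x := lt - st) (y := lt) (z := lt' - st) (w := lt')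
      (hint _ ⟨by linarith, by linarith⟩) (hint _ ⟨by linarith, by linarith⟩)
      (by linarith) (by linarith) (by ring)
    simp only [ProbabilityTheory.cgf, ProbabilityTheory.mgf] at key
    linarith
  · intro lt st st' h0 h1 h2 hint
    have key := hconv.add_lt_add_of_add_eq (x := -st') (y := -st) (z := lt - st') (w := lt - st)
      (hint _ ⟨by linarith, by linarith⟩) (hint _ ⟨by linarith, by linarith⟩)
      (by linarith) (by linarith) (by ring)
    simp only [ProbabilityTheory.cgf, ProbabilityTheory.mgf] at key
    linarith
end

section
/- Let ψ : ℝ → ℝ be twice continuously differentiable with ψ(0) = 0, and suppose that ψ(σ) + ψ(−λ) − ψ(σ−λ) = λσ for all λ > 0 and σ > 0. Then there exists a constant p such that ψ(α) = pα + α²/2 for all α ∈ ℝ. -/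
/-!
Subtracting the Brownian part, `g x = ψ x - x ^ 2 / 2` satisfies `g s + g (-l) = g (s - l)` for
positive `s` and `l`. Taking `s = l` shows that `g` is odd, and taking `s = u + l` then shows that
`g` is additive on the positive reals, hence on all of `ℝ`. A continuous additive function on `ℝ`
is linear, so `g x = x * g 1` and `p = g 1`.
-/

/-- A function that vanishes at `0` and is additive on pairs of opposite signs is additive. -/
theorem additive_of_additive_opposite_signs (g : ℝ → ℝ) (h0 : g 0 = 0)
    (hg : ∀ l s : ℝ, 0 < l → 0 < s → g s + g (-l) = g (s - l)) (x y : ℝ) :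
    g (x + y) = g x + g y := by
  have hodd : ∀ s, 0 < s → g (-s) = -g s := by
    intro s hs
    have h := hg s s hs hs
    rw [sub_self, h0] at h
    linarith
  have hpos : ∀ s t, 0 < s → 0 < t → g (s + t) = g s + g t := by
    intro s t hs ht
    have h := hg t (s + t) ht (by linarith)
    rw [add_sub_cancel_right, hodd t ht] at h
    linarith
  rcases lt_trichotomy x 0 with hx | rfl | hx
  · rcases lt_trichotomy y 0 with hy | rfl | hy
    · have h := hpos (-x) (-y) (by linarith) (by linarith)
      have hx' := hodd (-x) (by linarith)
      have hy' := hodd (-y) (by linarith)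
      have hxy := hodd (-x + -y) (by linarith)
      rw [neg_neg] at hx' hy'
      rw [show -(-x + -y) = x + y by ring] at hxy
      linarith
    · simp [h0]
    · have h := hg (-x) y (by linarith) hy
      rw [neg_neg, sub_neg_eq_add, add_comm y x] at h
      linarith
  · simp [h0]
  · rcases lt_trichotomy y 0 with hy | rfl | hy
    · have h := hg (-y) x (by linarith) hx
      rw [neg_neg, sub_neg_eq_add] at h
      exact h.symm
    · simp [h0]
    · exact hpos x y hx hy


/-- Geometric Brownian motion is the only geometric Lévy model with a bilinear excess
rate of return: if `ψ : ℝ → ℝ` is twice continuously differentiable, `ψ 0 = 0`, and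
`ψ(σ) + ψ(−λ) − ψ(σ−λ) = λσ` for all `λ, σ > 0`, then `ψ(α) = pα + α²/2` for some
constant `p`. -/
theorem bilinear_risk_premium_iff_brownian
    (ψ : ℝ → ℝ) (hψ : ContDiff ℝ 2 ψ) (h0 : ψ 0 = 0)
    (hbil : ∀ lam sig : ℝ, 0 < lam → 0 < sig →
      ψ sig + ψ (-lam) - ψ (sig - lam) = lam * sig) :
    ∃ p : ℝ, ∀ α : ℝ, ψ α = p * α + α ^ 2 / 2 := by
  let g : ℝ → ℝ := fun x => ψ x - x ^ 2 / 2
  have hg0 : g 0 = 0 := by simp [g, h0]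
  have hcont : Continuous g := hψ.continuous.sub (by fun_prop)
  have hadd : ∀ x y, g (x + y) = g x + g y := by
    refine additive_of_additive_opposite_signs g hg0 fun l s hl hs => ?_
    have h := hbil l s hl hs
    simp only [g]
    linarith
  let G : ℝ →+ ℝ := ⟨⟨g, hg0⟩, hadd⟩
  refine ⟨g 1, fun α => ?_⟩
  have h : g (α • (1 : ℝ)) = α • g 1 := map_real_smul G hcont α 1
  simp only [smul_eq_mul, mul_one] at h
  have hα : g α = ψ α - α ^ 2 / 2 := rfl
  linarith
end

section
/- Let n be a positive integer and for each i = 1, …, n let X_i be a non-degenerate real random variable on a probability space (Ω, μ) with ψ_i(α) = log E[e^{αX_i}]. Let λ, σ ∈ ℝⁿ have nonnegative components, with E[e^{αX_i}] < ∞ for all α ∈ [−λ_i, σ_i] for each i, and suppose there exists an index i with λ_i > 0 and σ_i > 0. Then the total risk premium R(λ, σ) = Σ_{i=1}^n (ψ_i(σ_i) + ψ_i(−λ_i) − ψ_i(σ_i − λ_i)) is strictly positive. Moreover, R is nondecreasing in each component of λ and of σ, and strictly increasing in λ_i (respectively σ_i) whenever σ_i > 0 (respectively λ_i > 0). -/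
/-!
The risk premium is controlled factor by factor through strict convexity of the cumulant
generating function `ψ` of a non-degenerate variable, used in four-point form: if
`p < q`, `p < r` and `q + r = p + s`, then `ψ q + ψ r < ψ p + ψ s` (`cgf_add_lt_cgf_add`).

Write `q = p + u`, `r = p + v`, `s = p + u + v` and let `M = exp ψ`. The inequality
`M (p + u) M (p + v) < M p M (p + u + v)` says that the increasing functions `exp (u X)` and
`exp (v X)` are positively correlated under the measure tilted by `exp (p X)`. To see this, choose
`c` so that `exp (u c)` is the tilted mean of `exp (u X)`. The function
`exp (p X) (exp (u X) - exp (u c)) (exp (v X) - exp (v c))` is nonnegative and vanishes only where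
`X = c`, so its integral is positive, and that integral is
`M (p + u + v) - exp (u c) M (p + v)` (`mgf_mul_lt_mgf_mul`).

For the theorem, each summand `ψ σ + ψ (-λ) - ψ (σ - λ)` is handled with the points
`-λ, σ - λ, 0, σ` (positivity, using `ψ 0 = 0`), `-λ', σ - λ', -λ, σ - λ` (monotonicity in `λ`) and
`σ - λ, σ, σ' - λ, σ'` (monotonicity in `σ`).
-/

open MeasureTheory

open ProbabilityTheory

/-- The difference of the two sides is `mgf X μ p` times the integral of
`exp (p X) (exp (u X) - exp (u c)) (exp (v X) - exp (v c))`, where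
`exp (u c) = mgf X μ (p + u) / mgf X μ p`. -/
lemma mgf_mul_lt_mgf_mul {Ω : Type*} [MeasurableSpace Ω] {μ : Measure Ω} [IsProbabilityMeasure μ]
    {X : Ω → ℝ} (hnd : ¬ ∃ c : ℝ, ∀ᵐ ω ∂μ, X ω = c) {p u v : ℝ} (hu : 0 < u) (hv : 0 < v)
    (h0 : Integrable (fun ω => Real.exp (p * X ω)) μ)
    (h1 : Integrable (fun ω => Real.exp ((p + u) * X ω)) μ)
    (h2 : Integrable (fun ω => Real.exp ((p + v) * X ω)) μ)
    (h3 : Integrable (fun ω => Real.exp ((p + u + v) * X ω)) μ) :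
    mgf X μ (p + u) * mgf X μ (p + v) < mgf X μ p * mgf X μ (p + u + v) := by
  have m0 : 0 < mgf X μ p := mgf_pos h0
  have m1 : 0 < mgf X μ (p + u) := mgf_pos h1
  obtain ⟨c, hc⟩ : ∃ c : ℝ, Real.exp (u * c) * mgf X μ p = mgf X μ (p + u) := by
    refine ⟨Real.log (mgf X μ (p + u) / mgf X μ p) / u, ?_⟩
    rw [mul_div_cancel₀ _ hu.ne', Real.exp_log (div_pos m1 m0), div_mul_cancel₀ _ m0.ne']
  set F : Ω → ℝ := fun ω => Real.exp (p * X ω) *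
    ((Real.exp (u * X ω) - Real.exp (u * c)) * (Real.exp (v * X ω) - Real.exp (v * c))) with hF
  have hFexp : F = fun ω => (Real.exp ((p + u + v) * X ω)
      - Real.exp (v * c) * Real.exp ((p + u) * X ω))
      - (Real.exp (u * c) * Real.exp ((p + v) * X ω)
        - Real.exp (u * c) * Real.exp (v * c) * Real.exp (p * X ω)) := by
    funext ω
    simp only [hF, add_mul, Real.exp_add]
    ring
  have i1 := h1.const_mul (Real.exp (v * c))
  have i2 := h2.const_mul (Real.exp (u * c))
  have i0 := h0.const_mul (Real.exp (u * c) * Real.exp (v * c))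
  have hFint : Integrable F μ := by
    rw [hFexp]
    exact (h3.sub i1).sub (i2.sub i0)
  have hFval : ∫ ω, F ω ∂μ = (mgf X μ (p + u + v) - Real.exp (v * c) * mgf X μ (p + u))
      - (Real.exp (u * c) * mgf X μ (p + v)
        - Real.exp (u * c) * Real.exp (v * c) * mgf X μ p) := by
    rw [hFexp]
    refine (integral_sub (h3.sub i1) (i2.sub i0)).trans ?_
    refine congrArg₂ (· - ·) ((integral_sub h3 i1).trans ?_) ((integral_sub i2 i0).trans ?_) <;>
      simp only [integral_const_mul, mgf]
  have hFpos : ∀ ω, X ω ≠ c → 0 < F ω := by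
    intro ω hω
    refine mul_pos (Real.exp_pos _) ?_
    rcases lt_or_gt_of_ne hω with h | h
    · exact mul_pos_of_neg_of_neg
        (sub_neg.2 (Real.exp_lt_exp.2 (mul_lt_mul_of_pos_left h hu)))
        (sub_neg.2 (Real.exp_lt_exp.2 (mul_lt_mul_of_pos_left h hv)))
    · exact mul_pos
        (sub_pos.2 (Real.exp_lt_exp.2 (mul_lt_mul_of_pos_left h hu)))
        (sub_pos.2 (Real.exp_lt_exp.2 (mul_lt_mul_of_pos_left h hv)))
  have hFnn : 0 ≤ F := by
    intro ω
    by_cases h : X ω = c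
    · simp [hF, h]
    · exact (hFpos ω h).le
  have hI : 0 < ∫ ω, F ω ∂μ := by
    refine (integral_nonneg hFnn).lt_of_ne' fun h => hnd ⟨c, ?_⟩
    filter_upwards [(integral_eq_zero_iff_of_nonneg hFnn hFint).1 h] with ω hω
    by_contra hne
    exact (hFpos ω hne).ne' hω
  have key : Real.exp (u * c) * mgf X μ (p + v) < mgf X μ (p + u + v) := by
    rw [hFval] at hI
    linear_combination hI + Real.exp (v * c) * hc
  calc mgf X μ (p + u) * mgf X μ (p + v)
      = mgf X μ p * (Real.exp (u * c) * mgf X μ (p + v)) := by rw [← hc]; ring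
    _ < _ := mul_lt_mul_of_pos_left key m0

/-- Strict convexity of the cumulant generating function in four-point form. -/
lemma cgf_add_lt_cgf_add {Ω : Type*} [MeasurableSpace Ω] {μ : Measure Ω} [IsProbabilityMeasure μ]
    {X : Ω → ℝ} (hnd : ¬ ∃ c : ℝ, ∀ᵐ ω ∂μ, X ω = c) {p q r s : ℝ} (hpq : p < q) (hpr : p < r)
    (hs : q + r = p + s)
    (hint : ∀ α ∈ Set.Icc p s, Integrable (fun ω => Real.exp (α * X ω)) μ) :
    cgf X μ q + cgf X μ r < cgf X μ p + cgf X μ s := by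
  have hp := hint p ⟨le_rfl, by linarith⟩
  have hq := hint q ⟨hpq.le, by linarith⟩
  have hr := hint r ⟨hpr.le, by linarith⟩
  have hs' := hint s ⟨by linarith, le_rfl⟩
  obtain ⟨u, rfl⟩ : ∃ u, q = p + u := ⟨q - p, by ring⟩
  obtain ⟨v, rfl⟩ : ∃ v, r = p + v := ⟨r - p, by ring⟩
  obtain rfl : s = p + u + v := by linarith
  have h := mgf_mul_lt_mgf_mul hnd (by linarith) (by linarith) hp hq hr hs'
  have mq := mgf_pos hq
  have mr := mgf_pos hr
  simp only [cgf]
  rw [← Real.log_mul mq.ne' mr.ne', ← Real.log_mul (mgf_pos hp).ne' (mgf_pos hs').ne']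
  exact Real.log_lt_log (mul_pos mq mr) h

lemma cgf_add_le_cgf_add {Ω : Type*} [MeasurableSpace Ω] {μ : Measure Ω} [IsProbabilityMeasure μ]
    {X : Ω → ℝ} (hnd : ¬ ∃ c : ℝ, ∀ᵐ ω ∂μ, X ω = c) {p q r s : ℝ} (hpq : p ≤ q) (hpr : p ≤ r)
    (hs : q + r = p + s)
    (hint : ∀ α ∈ Set.Icc p s, Integrable (fun ω => Real.exp (α * X ω)) μ) :
    cgf X μ q + cgf X μ r ≤ cgf X μ p + cgf X μ s := by
  rcases hpq.eq_or_lt with rfl | hpq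
  · rw [add_left_cancel hs]
  rcases hpr.eq_or_lt with rfl | hpr
  · rw [show q = s by linarith, add_comm]
  exact (cgf_add_lt_cgf_add hnd hpq hpr hs hint).le

/-- Proposition 4: in a multi-dimensional geometric Lévy model with independent,
non-degenerate drivers `X i` with cumulant generating functions
`ψ i α = log E[exp (α * X i)]`, and nonnegative risk-aversion and volatility vectors
`λ, σ` with `λ i > 0` and `σ i > 0` for some `i`, the total risk premium
`R(λ, σ) = ∑ i, (ψ i (σ i) + ψ i (−λ i) − ψ i (σ i − λ i))` is strictly positive.
Moreover `R` is nondecreasing in each component of `λ` and of `σ`, and strictly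
increasing in `λ j` (resp. `σ j`) whenever `σ j > 0` (resp. `λ j > 0`). -/
theorem multifactor_risk_premium
    {Ω : Type*} [MeasurableSpace Ω] (μ : Measure Ω) [IsProbabilityMeasure μ]
    (n : ℕ) (hn : 0 < n) (X : Fin n → Ω → ℝ) (hX : ∀ i, Measurable (X i))
    (hnd : ∀ i, ¬ ∃ c : ℝ, ∀ᵐ ω ∂μ, X i ω = c)
    (lam sig : Fin n → ℝ) (hlam : ∀ i, 0 ≤ lam i) (hsig : ∀ i, 0 ≤ sig i)
    (hpos : ∃ i, 0 < lam i ∧ 0 < sig i)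
    (hint : ∀ i, ∀ α ∈ Set.Icc (-(lam i)) (sig i),
      Integrable (fun ω => Real.exp (α * X i ω)) μ) :
    let ψ : Fin n → ℝ → ℝ := fun i α => Real.log (∫ ω, Real.exp (α * X i ω) ∂μ)
    let R : (Fin n → ℝ) → (Fin n → ℝ) → ℝ := fun l s =>
      ∑ i, (ψ i (s i) + ψ i (-(l i)) - ψ i (s i - l i))
    0 < R lam sig
    ∧ (∀ lam' : Fin n → ℝ, (∀ i, lam i ≤ lam' i) →
        (∀ i, ∀ α ∈ Set.Icc (-(lam' i)) (sig i),
          Integrable (fun ω => Real.exp (α * X i ω)) μ) →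
        R lam sig ≤ R lam' sig)
    ∧ (∀ sig' : Fin n → ℝ, (∀ i, sig i ≤ sig' i) →
        (∀ i, ∀ α ∈ Set.Icc (-(lam i)) (sig' i),
          Integrable (fun ω => Real.exp (α * X i ω)) μ) →
        R lam sig ≤ R lam sig')
    ∧ (∀ j : Fin n, 0 < sig j → ∀ lam' : Fin n → ℝ,
        (∀ i, lam i ≤ lam' i) → lam j < lam' j →
        (∀ i, ∀ α ∈ Set.Icc (-(lam' i)) (sig i),
          Integrable (fun ω => Real.exp (α * X i ω)) μ) →
        R lam sig < R lam' sig)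
    ∧ (∀ j : Fin n, 0 < lam j → ∀ sig' : Fin n → ℝ,
        (∀ i, sig i ≤ sig' i) → sig j < sig' j →
        (∀ i, ∀ α ∈ Set.Icc (-(lam i)) (sig' i),
          Integrable (fun ω => Real.exp (α * X i ω)) μ) →
        R lam sig < R lam sig') := by
  intro ψ R
  have hψ0 (i : Fin n) : cgf (X i) μ 0 = 0 := cgf_zero
  have int_lam {lam' : Fin n → ℝ}
      (h : ∀ i, ∀ α ∈ Set.Icc (-(lam' i)) (sig i),
        Integrable (fun ω => Real.exp (α * X i ω)) μ) (i : Fin n) :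
      ∀ α ∈ Set.Icc (-(lam' i)) (sig i - lam i),
        Integrable (fun ω => Real.exp (α * X i ω)) μ :=
    fun α hα => h i α ⟨hα.1, by linarith [hα.2, hlam i]⟩
  have int_sig {sig' : Fin n → ℝ}
      (h : ∀ i, ∀ α ∈ Set.Icc (-(lam i)) (sig' i),
        Integrable (fun ω => Real.exp (α * X i ω)) μ) (i : Fin n) :
      ∀ α ∈ Set.Icc (sig i - lam i) (sig' i),
        Integrable (fun ω => Real.exp (α * X i ω)) μ :=
    fun α hα => h i α ⟨by linarith [hα.1, hsig i], hα.2⟩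
  have le_lam {lam' : Fin n → ℝ} (hle : ∀ i, lam i ≤ lam' i)
      (h : ∀ i, ∀ α ∈ Set.Icc (-(lam' i)) (sig i),
        Integrable (fun ω => Real.exp (α * X i ω)) μ) (i : Fin n) :
      ψ i (sig i) + ψ i (-(lam i)) - ψ i (sig i - lam i)
        ≤ ψ i (sig i) + ψ i (-(lam' i)) - ψ i (sig i - lam' i) := by
    have := cgf_add_le_cgf_add (hnd i) (p := -(lam' i)) (q := sig i - lam' i) (r := -(lam i))
      (s := sig i - lam i) (by linarith [hsig i]) (by linarith [hle i]) (by ring)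
      (int_lam h i)
    simp only [cgf, mgf] at this
    simp only [ψ]
    linarith
  have le_sig {sig' : Fin n → ℝ} (hle : ∀ i, sig i ≤ sig' i)
      (h : ∀ i, ∀ α ∈ Set.Icc (-(lam i)) (sig' i),
        Integrable (fun ω => Real.exp (α * X i ω)) μ) (i : Fin n) :
      ψ i (sig i) + ψ i (-(lam i)) - ψ i (sig i - lam i)
        ≤ ψ i (sig' i) + ψ i (-(lam i)) - ψ i (sig' i - lam i) := by
    have := cgf_add_le_cgf_add (hnd i) (p := sig i - lam i) (q := sig i) (r := sig' i - lam i)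
      (s := sig' i) (by linarith [hlam i]) (by linarith [hle i]) (by ring)
      (int_sig h i)
    simp only [cgf, mgf] at this
    simp only [ψ]
    linarith
  refine ⟨?_, ?_, ?_, ?_, ?_⟩
  · obtain ⟨j, hj, hj'⟩ := hpos
    refine Finset.sum_pos' (fun i _ => ?_) ⟨j, Finset.mem_univ j, ?_⟩
    · have := cgf_add_le_cgf_add (hnd i) (p := -(lam i)) (q := sig i - lam i) (r := 0)
        (s := sig i) (by linarith [hsig i]) (by linarith [hlam i]) (by ring) (hint i)
      rw [hψ0] at this
      simp only [cgf, mgf] at this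
      simp only [ψ]
      linarith
    · have := cgf_add_lt_cgf_add (hnd j) (p := -(lam j)) (q := sig j - lam j) (r := 0)
        (s := sig j) (by linarith) (by linarith) (by ring) (hint j)
      rw [hψ0] at this
      simp only [cgf, mgf] at this
      simp only [ψ]
      linarith
  · exact fun lam' hle h => Finset.sum_le_sum fun i _ => le_lam hle h i
  · exact fun sig' hle h => Finset.sum_le_sum fun i _ => le_sig hle h i
  · intro j hj lam' hle hlt h
    refine Finset.sum_lt_sum (fun i _ => le_lam hle h i) ⟨j, Finset.mem_univ j, ?_⟩
    have := cgf_add_lt_cgf_add (hnd j) (p := -(lam' j)) (q := sig j - lam' j) (r := -(lam j))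
      (s := sig j - lam j) (by linarith) (by linarith) (by ring) (int_lam h j)
    simp only [cgf, mgf] at this
    simp only [ψ]
    linarith
  · intro j hj sig' hle hlt h
    refine Finset.sum_lt_sum (fun i _ => le_sig hle h i) ⟨j, Finset.mem_univ j, ?_⟩
    have := cgf_add_lt_cgf_add (hnd j) (p := sig j - lam j) (q := sig j) (r := sig' j - lam j)
      (s := sig' j) (by linarith) (by linarith) (by ring) (int_sig h j)
    simp only [cgf, mgf] at this
    simp only [ψ]
    linarith
end

section
/- Let m > 0, λ > 0 and 0 < σ < 1. Then the inverse excess rate of return of the geometric gamma foreign exchange model, R̃(λ, σ) = m · log((1 + λ) / ((1 + σ)(1 − σ + λ))), is strictly positive if and only if σ > λ. Equivalently, with ψ(α) = −m log(1−α), R̃(λ,σ) = ψ(−σ) + ψ(σ−λ) − ψ(−λ) > 0 if and only if σ > λ. -/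
/-! The denominator expands as `(1 + σ)(1 − σ + λ) = (1 + λ) − σ(σ − λ)`, and it is positive, so
the argument of the logarithm exceeds `1` exactly when `σ(σ − λ) > 0`, that is, when `σ > λ`.
The formula in terms of `ψ` is the additivity of `log`, all of whose arguments here are positive. -/

/-- Example 5 (gamma, inverse FX rate): for `m > 0`, `λ > 0`, `0 < σ < 1`, the inverse
excess rate of return `R̃(λ,σ) = m log((1 + λ)/((1 + σ)(1 − σ + λ)))` is strictly
positive iff `σ > λ`; equivalently, with `ψ(α) = −m log(1 − α)`,
`R̃(λ,σ) = ψ(−σ) + ψ(σ−λ) − ψ(−λ)` equals this expression. -/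
theorem gamma_inverse_risk_premium (m lam sig : ℝ) (hm : 0 < m)
    (hlam : 0 < lam) (hsig0 : 0 < sig) (hsig1 : sig < 1) :
    (0 < m * Real.log ((1 + lam) / ((1 + sig) * (1 - sig + lam))) ↔ lam < sig)
    ∧ (-m * Real.log (1 - (-sig))) + (-m * Real.log (1 - (sig - lam)))
        - (-m * Real.log (1 - (-lam)))
      = m * Real.log ((1 + lam) / ((1 + sig) * (1 - sig + lam))) := by
  have h1 : 0 < 1 + sig := by linarith
  have h2 : 0 < 1 - sig + lam := by linarith
  have h3 : 0 < 1 + lam := by linarith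
  have h12 : 0 < (1 + sig) * (1 - sig + lam) := mul_pos h1 h2
  constructor
  · rw [mul_pos_iff_of_pos_left hm, Real.log_pos_iff (div_pos h3 h12).le, one_lt_div h12]
    have key : (1 + sig) * (1 - sig + lam) = 1 + lam - sig * (sig - lam) := by ring
    rw [key, sub_lt_self_iff, mul_pos_iff_of_pos_left hsig0, sub_pos]
  · rw [Real.log_div h3.ne' h12.ne', Real.log_mul h1.ne' h2.ne',
      show 1 - (-sig) = 1 + sig by ring, show 1 - (sig - lam) = 1 - sig + lam by ring,
      show 1 - (-lam) = 1 + lam by ring]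
    ring
end

section
/- Let m > 0 and let λ, σ > 0 satisfy λ² < 2m and σ² < 2m. Then m · log((1 − (σ−λ)²/(2m)) / ((1 − λ²/(2m))(1 − σ²/(2m)))) > 0. Equivalently, for the symmetric variance gamma Lévy exponent ψ(α) = −m log(1 − α²/(2m)) (defined for α² < 2m), the risk premium R(λ, σ) = ψ(σ) + ψ(−λ) − ψ(σ−λ) is strictly positive. -/
/-!
Put `c = λσ/(2m)`. Inside the logarithm, numerator minus denominator equals `2c - c² = c(2 - c)`,
and `0 < c < 1` because `λσ ≤ (λ² + σ²)/2 < 2m`. Hence the quotient exceeds `1`.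
Positivity of the three arguments justifies splitting the logarithm in the second formula.
-/

/-- Example 6 (symmetric variance gamma): for `m > 0` and `λ, σ > 0` with `λ² < 2m`
and `σ² < 2m`, the VG risk premium
`m log((1 − (σ−λ)²/(2m)) / ((1 − λ²/(2m))(1 − σ²/(2m))))` is strictly positive;
equivalently, with `ψ(α) = −m log(1 − α²/(2m))`, `R(λ,σ) = ψ(σ) + ψ(−λ) − ψ(σ−λ)`
equals this expression and is strictly positive. -/
theorem vg_risk_premium (m lam sig : ℝ) (hm : 0 < m)
    (hlam : 0 < lam) (hsig : 0 < sig)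
    (hlam2 : lam ^ 2 < 2 * m) (hsig2 : sig ^ 2 < 2 * m) :
    0 < m * Real.log ((1 - (sig - lam) ^ 2 / (2 * m))
          / ((1 - lam ^ 2 / (2 * m)) * (1 - sig ^ 2 / (2 * m))))
    ∧ (-m * Real.log (1 - sig ^ 2 / (2 * m)))
        + (-m * Real.log (1 - (-lam) ^ 2 / (2 * m)))
        - (-m * Real.log (1 - (sig - lam) ^ 2 / (2 * m)))
      = m * Real.log ((1 - (sig - lam) ^ 2 / (2 * m))
          / ((1 - lam ^ 2 / (2 * m)) * (1 - sig ^ 2 / (2 * m)))) := by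
  have ha : 0 < 1 - lam ^ 2 / (2 * m) := by
    rw [sub_pos, div_lt_one (by positivity)]; exact hlam2
  have hb : 0 < 1 - sig ^ 2 / (2 * m) := by
    rw [sub_pos, div_lt_one (by positivity)]; exact hsig2
  have hc : 0 < lam * sig / (2 * m) := by positivity
  have hc1 : lam * sig / (2 * m) < 1 := by
    rw [div_lt_one (by positivity)]
    nlinarith [sq_nonneg (lam - sig)]
  have hdiff : (1 - (sig - lam) ^ 2 / (2 * m))
      - (1 - lam ^ 2 / (2 * m)) * (1 - sig ^ 2 / (2 * m))
      = lam * sig / (2 * m) * (2 - lam * sig / (2 * m)) := by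
    field_simp
    ring
  have hD := mul_pos ha hb
  have hlt : (1 - lam ^ 2 / (2 * m)) * (1 - sig ^ 2 / (2 * m))
      < 1 - (sig - lam) ^ 2 / (2 * m) := by
    have := mul_pos hc (show 0 < 2 - lam * sig / (2 * m) by linarith)
    linarith
  refine ⟨mul_pos hm (Real.log_pos ((one_lt_div hD).2 hlt)), ?_⟩
  rw [Real.log_div (hD.trans hlt).ne' hD.ne', Real.log_mul ha.ne' hb.ne', neg_sq]
  ring
end

section
/- Let m > 0, 0 < q < 1, and let λ, σ > 0 satisfy q e^σ < 1. Then m · log((1−q)(1 − q e^{σ−λ}) / ((1 − q e^σ)(1 − q e^{−λ}))) > 0. Equivalently, for the negative binomial Lévy exponent ψ(α) = m log((1−q)/(1 − q e^α)) (defined for q e^α < 1), the risk premium R(λ, σ) = ψ(σ) + ψ(−λ) − ψ(σ−λ) is strictly positive. -/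
/-!
With `s = exp σ > 1` and `t = exp (-λ) < 1`, the argument of the logarithm exceeds `1` because
`(1 - q) (1 - q s t) - (1 - q s) (1 - q t) = q (s - 1) (1 - t) > 0`.
All four factors are positive, so the logarithms of quotients and products split without junk
values, which gives the formula for the risk premium.
-/

/-- Example 8 (negative binomial): for `m > 0`, `0 < q < 1`, and `λ, σ > 0` with
`q e^σ < 1`, the risk premium
`m log((1−q)(1 − q e^{σ−λ}) / ((1 − q e^σ)(1 − q e^{−λ})))` is strictly positive;
equivalently, with `ψ(α) = m log((1−q)/(1 − q e^α))`,
`R(λ,σ) = ψ(σ) + ψ(−λ) − ψ(σ−λ)` equals this expression and is strictly positive. -/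
theorem negbin_risk_premium (m q lam sig : ℝ) (hm : 0 < m)
    (hq0 : 0 < q) (hq1 : q < 1) (hlam : 0 < lam) (hsig : 0 < sig)
    (hqe : q * Real.exp sig < 1) :
    0 < m * Real.log ((1 - q) * (1 - q * Real.exp (sig - lam))
          / ((1 - q * Real.exp sig) * (1 - q * Real.exp (-lam))))
    ∧ m * Real.log ((1 - q) / (1 - q * Real.exp sig))
        + m * Real.log ((1 - q) / (1 - q * Real.exp (-lam)))
        - m * Real.log ((1 - q) / (1 - q * Real.exp (sig - lam)))
      = m * Real.log ((1 - q) * (1 - q * Real.exp (sig - lam))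
          / ((1 - q * Real.exp sig) * (1 - q * Real.exp (-lam)))) := by
  have hexp : Real.exp (sig - lam) = Real.exp sig * Real.exp (-lam) := by
    rw [sub_eq_add_neg, Real.exp_add]
  rw [hexp]
  have hs : 1 < Real.exp sig := Real.one_lt_exp_iff.mpr hsig
  have ht : Real.exp (-lam) < 1 := Real.exp_lt_one_iff.mpr (neg_lt_zero.mpr hlam)
  have ht0 : 0 < Real.exp (-lam) := Real.exp_pos _
  generalize Real.exp sig = s at *
  generalize Real.exp (-lam) = t at *
  have h1 : 0 < 1 - q := sub_pos.mpr hq1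
  have h2 : 0 < 1 - q * s := sub_pos.mpr hqe
  have h3 : 0 < 1 - q * t := by nlinarith
  have h4 : 0 < 1 - q * (s * t) := by nlinarith
  constructor
  · refine mul_pos hm (Real.log_pos ?_)
    rw [one_lt_div (mul_pos h2 h3)]
    have key : 0 < q * (s - 1) * (1 - t) :=
      mul_pos (mul_pos hq0 (sub_pos.mpr hs)) (sub_pos.mpr ht)
    linarith
  · rw [Real.log_div h1.ne' h2.ne', Real.log_div h1.ne' h3.ne', Real.log_div h1.ne' h4.ne',
      Real.log_div (mul_pos h1 h4).ne' (mul_pos h2 h3).ne', Real.log_mul h1.ne' h4.ne',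
      Real.log_mul h2.ne' h3.ne']
    ring
end

section
/- Let m > 0, 0 < q < 1, and let λ, σ > 0 satisfy q e^σ < 1. Then the inverse excess rate of return R̃(λ, σ) = m · log((1−q)(1 − q e^{−λ}) / ((1 − q e^{−σ})(1 − q e^{σ−λ}))) is strictly positive if and only if σ > λ. Equivalently, with ψ(α) = m log((1−q)/(1 − q e^α)), R̃(λ,σ) = ψ(−σ) + ψ(σ−λ) − ψ(−λ) > 0 if and only if σ > λ. -/
/-! With `a = e^{-σ}` and `b = e^{σ-λ}`, so that `ab = e^{-λ}`, the numerator minus the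
denominator inside the logarithm factors as
`(1 - q)(1 - qab) - (1 - qa)(1 - qb) = q (1 - a)(b - 1)`.
All four factors of the quotient are positive and `a < 1`, so the logarithm is positive exactly
when `b > 1`, that is, when `λ < σ`. The second claim expands both sides by `Real.log_div` and
`Real.log_mul`. -/

/-- Example 8 (negative binomial, inverse FX rate): for `m > 0`, `0 < q < 1`, and
`λ, σ > 0` with `q e^σ < 1`, the inverse excess rate of return
`R̃(λ,σ) = m log((1−q)(1 − q e^{−λ}) / ((1 − q e^{−σ})(1 − q e^{σ−λ})))` is strictly
positive iff `σ > λ`; equivalently, with `ψ(α) = m log((1−q)/(1 − q e^α))`,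
`R̃(λ,σ) = ψ(−σ) + ψ(σ−λ) − ψ(−λ)` equals this expression. -/
theorem negbin_inverse_risk_premium (m q lam sig : ℝ) (hm : 0 < m)
    (hq0 : 0 < q) (hq1 : q < 1) (hlam : 0 < lam) (hsig : 0 < sig)
    (hqe : q * Real.exp sig < 1) :
    (0 < m * Real.log ((1 - q) * (1 - q * Real.exp (-lam))
          / ((1 - q * Real.exp (-sig)) * (1 - q * Real.exp (sig - lam)))) ↔ lam < sig)
    ∧ m * Real.log ((1 - q) / (1 - q * Real.exp (-sig)))
        + m * Real.log ((1 - q) / (1 - q * Real.exp (sig - lam)))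
        - m * Real.log ((1 - q) / (1 - q * Real.exp (-lam)))
      = m * Real.log ((1 - q) * (1 - q * Real.exp (-lam))
          / ((1 - q * Real.exp (-sig)) * (1 - q * Real.exp (sig - lam)))) := by
  have ha1 : Real.exp (-sig) < 1 := Real.exp_lt_one_iff.2 (by linarith)
  have hab : Real.exp (-lam) = Real.exp (-sig) * Real.exp (sig - lam) := by
    rw [← Real.exp_add]; congr 1; ring
  have hb : 1 < Real.exp (sig - lam) ↔ lam < sig := by
    rw [Real.one_lt_exp_iff, sub_pos]
  have hA : 0 < 1 - q * Real.exp (-sig) := by nlinarith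
  have hB : 0 < 1 - q * Real.exp (sig - lam) := by
    have : Real.exp (sig - lam) < Real.exp sig := Real.exp_lt_exp.2 (by linarith)
    nlinarith
  have hC : 0 < 1 - q * Real.exp (-lam) := by
    have : Real.exp (-lam) < 1 := Real.exp_lt_one_iff.2 (by linarith)
    nlinarith
  have hQ : 0 < 1 - q := by linarith
  constructor
  · rw [mul_pos_iff_of_pos_left hm, Real.log_pos_iff (by positivity),
      one_lt_div (mul_pos hA hB), ← hb, ← sub_pos]
    have key : (1 - q) * (1 - q * Real.exp (-lam))
        - (1 - q * Real.exp (-sig)) * (1 - q * Real.exp (sig - lam))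
        = q * (1 - Real.exp (-sig)) * (Real.exp (sig - lam) - 1) := by
      rw [hab]; ring
    rw [key, mul_pos_iff_of_pos_left (mul_pos hq0 (sub_pos.2 ha1)), sub_pos]
  · rw [Real.log_div hQ.ne' hA.ne', Real.log_div hQ.ne' hB.ne', Real.log_div hQ.ne' hC.ne',
      Real.log_div (mul_pos hQ hC).ne' (mul_pos hA hB).ne', Real.log_mul hQ.ne' hC.ne',
      Real.log_mul hA.ne' hB.ne']
    ring
end

section
/- Let Y be a real random variable on a probability space with P(Y ≠ 0) > 0, let m > 0, and let λ, σ > 0 be such that φ(α) := E[e^{αY}] < ∞ for all α ∈ [−λ, σ]. Then m(φ(σ) + φ(−λ) − φ(σ−λ) − 1) > 0. Equivalently, for the compound Poisson Lévy exponent ψ(α) = m(φ(α) − 1), the risk premium R(λ, σ) = ψ(σ) + ψ(−λ) − ψ(σ−λ) is strictly positive. -/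
/-!
The quantity in parentheses is the expectation of
`exp (σ Y) + exp (-λ Y) - exp ((σ - λ) Y) - 1 = (exp (σ Y) - 1) (1 - exp (-λ Y))`.
Both factors have the sign of `Y`, so the product is nonnegative and vanishes only where `Y = 0`.
A nonnegative integrable function whose support has positive measure has positive integral.
-/

open MeasureTheory

/-- Both factors have the sign of `y`, since `a` and `b` are positive. -/
lemma exp_sub_one_mul_one_sub_exp_pos {a b y : ℝ} (ha : 0 < a) (hb : 0 < b) (hy : y ≠ 0) :
    0 < (Real.exp (a * y) - 1) * (1 - Real.exp ((-b) * y)) := by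
  rcases lt_or_gt_of_ne hy with h | h
  · have h1 : Real.exp (a * y) < 1 := Real.exp_lt_one_iff.mpr (by nlinarith)
    have h2 : 1 < Real.exp ((-b) * y) := Real.one_lt_exp_iff.mpr (by nlinarith)
    exact mul_pos_of_neg_of_neg (by linarith) (by linarith)
  · have h1 : 1 < Real.exp (a * y) := Real.one_lt_exp_iff.mpr (by nlinarith)
    have h2 : Real.exp ((-b) * y) < 1 := Real.exp_lt_one_iff.mpr (by nlinarith)
    exact mul_pos (by linarith) (by linarith)

/-- Example 3 (compound Poisson): if the jump-size variable `Y` satisfies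
`P(Y ≠ 0) > 0` and has finite moment generating function `φ(α) = E[exp (α Y)]` on
`[−λ, σ]` with `λ, σ > 0`, then for any jump rate `m > 0` the compound Poisson risk
premium `m (φ(σ) + φ(−λ) − φ(σ−λ) − 1)` is strictly positive. -/
theorem compound_poisson_risk_premium
    {Ω : Type*} [MeasurableSpace Ω] (μ : Measure Ω) [IsProbabilityMeasure μ]
    (Y : Ω → ℝ) (hY : Measurable Y)
    (hne : 0 < μ {ω | Y ω ≠ 0})
    (m lam sig : ℝ) (hm : 0 < m) (hlam : 0 < lam) (hsig : 0 < sig)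
    (hint : ∀ α ∈ Set.Icc (-lam) sig, Integrable (fun ω => Real.exp (α * Y ω)) μ) :
    0 < m * ((∫ ω, Real.exp (sig * Y ω) ∂μ)
             + (∫ ω, Real.exp ((-lam) * Y ω) ∂μ)
             - (∫ ω, Real.exp ((sig - lam) * Y ω) ∂μ) - 1) := by
  have i1 := hint sig ⟨by linarith, le_rfl⟩
  have i2 := hint (-lam) ⟨le_rfl, by linarith⟩
  have i3 := hint (sig - lam) ⟨by linarith, by linarith⟩
  have i12 : Integrable (fun ω => Real.exp (sig * Y ω) + Real.exp ((-lam) * Y ω)) μ :=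
    i1.add i2
  have i123 : Integrable (fun ω => Real.exp (sig * Y ω) + Real.exp ((-lam) * Y ω)
      - Real.exp ((sig - lam) * Y ω)) μ := i12.sub i3
  have key : ∀ ω, Real.exp (sig * Y ω) + Real.exp ((-lam) * Y ω)
      - Real.exp ((sig - lam) * Y ω) - 1
      = (Real.exp (sig * Y ω) - 1) * (1 - Real.exp ((-lam) * Y ω)) := by
    intro ω
    have h : Real.exp ((sig - lam) * Y ω)
        = Real.exp (sig * Y ω) * Real.exp ((-lam) * Y ω) := by
      rw [← Real.exp_add]; congr 1; ring
    rw [h]; ring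
  have hI : Integrable (fun ω => Real.exp (sig * Y ω) + Real.exp ((-lam) * Y ω)
      - Real.exp ((sig - lam) * Y ω) - 1) μ :=
    i123.sub (integrable_const 1)
  have hE : ∫ ω, (Real.exp (sig * Y ω) + Real.exp ((-lam) * Y ω)
      - Real.exp ((sig - lam) * Y ω) - 1) ∂μ
      = (∫ ω, Real.exp (sig * Y ω) ∂μ) + (∫ ω, Real.exp ((-lam) * Y ω) ∂μ)
        - (∫ ω, Real.exp ((sig - lam) * Y ω) ∂μ) - 1 := by
    rw [integral_sub i123 (integrable_const 1), integral_sub i12 i3,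
      integral_add i1 i2]
    simp
  refine mul_pos hm ?_
  rw [← hE]
  simp only [key] at hI ⊢
  rw [integral_pos_iff_support_of_nonneg _ hI]
  · refine hne.trans_le (measure_mono fun ω hω => ?_)
    exact (exp_sub_one_mul_one_sub_exp_pos hsig hlam hω).ne'
  · intro ω
    by_cases hy : Y ω = 0
    · simp [hy]
    · exact (exp_sub_one_mul_one_sub_exp_pos hsig hlam hy).le
end

section
/- Let m > 0 and let λ, σ, β, θ > 0. Then λσ + m(e^{θ²/2} + e^{β²/2} − e^{(θ−β)²/2} − 1) > 0, and this quantity is strictly increasing in each of the four variables λ, σ, β, θ. In particular, e^{θ²/2} + e^{β²/2} > e^{(θ−β)²/2} + 1 for all β, θ > 0. -/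
/-!
Write `G(x) = exp (x² / 2)`. Its derivative `x G(x)` is strictly increasing, since its own
derivative is `(1 + x²) G(x) > 0` (`strictMono_mul_exp_sq_half`). Hence for `t > 0` the
difference `G(x) - G(x - t)` is strictly increasing in `x` on the whole line
(`strictMono_exp_sq_half_sub`). This gives the monotonicity in `beta`; since `G` is even, the
jump term is symmetric in `beta` and `theta`, which gives the monotonicity in `theta`.
Comparing the points `0` and `beta` yields `G(theta - beta) + 1 < G(theta) + G(beta)`, hence
positivity. The dependence on `lam` and `sig` is only through the product `lam * sig`.
-/

lemma hasDerivAt_exp_sq_half (x : ℝ) :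
    HasDerivAt (fun x : ℝ => Real.exp (x ^ 2 / 2)) (x * Real.exp (x ^ 2 / 2)) x := by
  have h : HasDerivAt (fun x : ℝ => x ^ 2 / 2) x x := by
    simpa using (hasDerivAt_pow 2 x).div_const 2
  simpa [mul_comm] using h.exp

lemma strictMono_mul_exp_sq_half : StrictMono fun x : ℝ => x * Real.exp (x ^ 2 / 2) := by
  refine strictMono_of_deriv_pos fun x => ?_
  have h := (hasDerivAt_id' x).mul (hasDerivAt_exp_sq_half x)
  rw [show deriv (fun x : ℝ => x * Real.exp (x ^ 2 / 2)) x = _ from h.deriv]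
  have := Real.exp_pos (x ^ 2 / 2)
  nlinarith [mul_nonneg (sq_nonneg x) this.le]

lemma strictMono_exp_sq_half_sub {t : ℝ} (ht : 0 < t) :
    StrictMono fun x : ℝ => Real.exp (x ^ 2 / 2) - Real.exp ((x - t) ^ 2 / 2) := by
  refine strictMono_of_deriv_pos fun x => ?_
  have h := (hasDerivAt_exp_sq_half x).sub
    ((hasDerivAt_exp_sq_half (x - t)).comp_sub_const x t)
  rw [show deriv (fun x : ℝ => Real.exp (x ^ 2 / 2) - Real.exp ((x - t) ^ 2 / 2)) x = _
    from h.deriv]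
  exact sub_pos.mpr (strictMono_mul_exp_sq_half (sub_lt_self x ht))

/-- Example 4 (jump diffusion): the Merton-type excess rate of return
`R(λ,σ,β,θ) = λσ + m (e^{θ²/2} + e^{β²/2} − e^{(θ−β)²/2} − 1)` is strictly positive
for `λ, σ, β, θ > 0` and is strictly increasing in each of the four variables; in
particular `e^{θ²/2} + e^{β²/2} > e^{(θ−β)²/2} + 1` for all `β, θ > 0`. -/
theorem jump_diffusion_risk_premium (m : ℝ) (hm : 0 < m) :
    let R : ℝ → ℝ → ℝ → ℝ → ℝ := fun lam sig beta theta =>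
      lam * sig + m * (Real.exp (theta ^ 2 / 2) + Real.exp (beta ^ 2 / 2)
        - Real.exp ((theta - beta) ^ 2 / 2) - 1)
    (∀ lam sig beta theta : ℝ, 0 < lam → 0 < sig → 0 < beta → 0 < theta →
      0 < R lam sig beta theta)
    ∧ (∀ lam lam' sig beta theta : ℝ, 0 < lam → lam < lam' →
        0 < sig → 0 < beta → 0 < theta →
        R lam sig beta theta < R lam' sig beta theta)
    ∧ (∀ lam sig sig' beta theta : ℝ, 0 < lam → 0 < sig → sig < sig' →
        0 < beta → 0 < theta →
        R lam sig beta theta < R lam sig' beta theta)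
    ∧ (∀ lam sig beta beta' theta : ℝ, 0 < lam → 0 < sig → 0 < beta →
        beta < beta' → 0 < theta →
        R lam sig beta theta < R lam sig beta' theta)
    ∧ (∀ lam sig beta theta theta' : ℝ, 0 < lam → 0 < sig → 0 < beta →
        0 < theta → theta < theta' →
        R lam sig beta theta < R lam sig beta theta')
    ∧ (∀ beta theta : ℝ, 0 < beta → 0 < theta →
        Real.exp ((theta - beta) ^ 2 / 2) + 1
          < Real.exp (theta ^ 2 / 2) + Real.exp (beta ^ 2 / 2)) := by
  intro R
  have key : ∀ beta theta : ℝ, 0 < beta → 0 < theta →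
      Real.exp ((theta - beta) ^ 2 / 2) + 1
        < Real.exp (theta ^ 2 / 2) + Real.exp (beta ^ 2 / 2) := by
    intro b t hb ht
    have h := strictMono_exp_sq_half_sub ht hb
    simp only [zero_sub, neg_sq, ne_eq, OfNat.ofNat_ne_zero, not_false_eq_true, zero_pow,
      zero_div, Real.exp_zero, sub_sq_comm b t] at h
    linarith
  refine ⟨?_, ?_, ?_, ?_, ?_, key⟩
  · intro l s b t hl hs hb ht
    have h := key b t hb ht
    exact add_pos (mul_pos hl hs) (mul_pos hm (by linarith))
  · intro l l' s b t _ hl hs _ _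
    exact add_lt_add_left (mul_lt_mul_of_pos_right hl hs) _
  · intro l s s' b t hl _ hs _ _
    exact add_lt_add_left (mul_lt_mul_of_pos_left hs hl) _
  · intro l s b b' t _ _ _ hb ht
    have h := strictMono_exp_sq_half_sub ht hb
    simp only [sub_sq_comm _ t] at h
    exact add_lt_add_right (mul_lt_mul_of_pos_left (by linarith) hm) _
  · intro l s b t t' _ _ hb _ ht
    have h := strictMono_exp_sq_half_sub hb ht
    simp only at h
    exact add_lt_add_right (mul_lt_mul_of_pos_left (by linarith) hm) _
end
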